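/- Suppose |ε_t| ≤ B almost surely and Var(ε_t | F_{t-1}) = σ² for all t ≥ 1, with B > 0 and σ² a constant. Let s_t = ‖(ρI + V_t)^{-1/2} M_t‖. Let (σ̂_t²)_{t≥1} be a process adapted to (F_t) such that P(∃ t ≥ 1 : σ̂_t² < σ²) ≤ δ₁, and set ν̂_t = σ̂_t² Σ_{i=1}^t ‖G_i‖². For a > 0 and x ≥ 0 let γ̄(a, x) = (∫_x^∞ u^{a−1} e^{−u} du)/Γ(a). Then for any θ > 0 and δ₁, δ₂ ∈ (0,1), with probability at least 1 − (δ₁ + δ₂) it holds simultaneously for all t ≥ 1 that [ (θ/B²)^{θ/B²} / ( Γ(θ/B²) · γ̄(θ/B², θ/B²) ) ] · [ Γ((B s_t + ν̂_t + θ)/B²) · γ̄((B s_t + ν̂_t + θ)/B², (ν̂_t + θ)/B²) / ((ν̂_t + θ)/B²)^{(B s_t + ν̂_t + θ)/B²} ] · exp(ν̂_t / B²) < 2/δ₂. -/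

import Mathlib

open MeasureTheory Filter Real
open scoped RealInnerProductSpace

noncomputable def outerProd {H : Type*} [NormedAddCommGroup H] [InnerProductSpace ℝ H]
    (x : H) : H →L[ℝ] H :=
  (innerSL ℝ x).smulRight x

noncomputable def upperGammaReg (a x : ℝ) : ℝ :=
  (∫ u in Set.Ioi x, u ^ (a - 1) * Real.exp (-u)) / Real.Gamma a

noncomputable def mixedBennettExpr (B θ ν s : ℝ) : ℝ :=
  ((θ / B ^ 2) ^ (θ / B ^ 2) /
      (Real.Gamma (θ / B ^ 2) * upperGammaReg (θ / B ^ 2) (θ / B ^ 2))) *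
    (Real.Gamma ((B * s + ν + θ) / B ^ 2) *
        upperGammaReg ((B * s + ν + θ) / B ^ 2) ((ν + θ) / B ^ 2) /
      ((ν + θ) / B ^ 2) ^ ((B * s + ν + θ) / B ^ 2)) *
    Real.exp (ν / B ^ 2)

/-!
For vectors in an inner product space, convexity of `t ↦ cosh √t` gives
`cosh ‖x + y‖ ≤ cosh ‖x‖ (1 + e^‖y‖ - 1 - ‖y‖) + (a term linear in y)`. Adding `X Xᵀ` to the Gram
operator never increases `‖R M‖`, where `R` is its inverse square root. Applied to
`R_{t+1} M_{t+1} = R_{t+1} M_t + ε_{t+1} G_{t+1}`, the two facts and Bennett's bound make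
`cosh (λ s_t) exp (-ψ(λ) ν_t)` a supermartingale for each `λ > 0`, where `ν_t = σ² ∑_{i ≤ t} ‖G_i‖²`
and `ψ(λ) = (e^{λB} - 1 - λB) / B²`.

Averaging over `λ = l / B`, with `l` distributed as the logarithm of a truncated Gamma variable,
keeps the supermartingale property, so Ville's inequality applies to the mixture. The same average
of `exp (λ s - ψ(λ) ν)` is exactly the incomplete-Gamma expression; it is decreasing in `ν`,
which allows `σ̂²` in place of `σ²`, and `exp ≤ 2 cosh` accounts for the factor `2`.
-/

open ProbabilityTheory
open scoped ENNReal

section Hyperbolic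

variable {E : Type*} [NormedAddCommGroup E] [InnerProductSpace ℝ E]

/-- The function `x ↦ eˣ - 1 - x`, the cumulant bound of Bennett's inequality. -/
noncomputable def bennettFun (x : ℝ) : ℝ := exp x - 1 - x

theorem bennettFun_nonneg (x : ℝ) : 0 ≤ bennettFun x := by
  unfold bennettFun
  linarith [add_one_le_exp x]

theorem continuous_bennettFun : Continuous bennettFun := by
  unfold bennettFun
  fun_prop

theorem hasSum_bennettFun (x : ℝ) :
    HasSum (fun n : ℕ ↦ x ^ (n + 2) / (n + 2).factorial) (bennettFun x) := by
  have hexp : HasSum (fun n : ℕ ↦ x ^ n / n.factorial) (exp x) := by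
    rw [exp_eq_exp_ℝ]
    exact NormedSpace.expSeries_div_hasSum_exp x
  simpa [bennettFun, Finset.sum_range_succ, sub_sub] using (hasSum_nat_add_iff' 2).2 hexp

theorem bennettFun_mul_le {r x : ℝ} (hr0 : 0 ≤ r) (hr1 : r ≤ 1) (hx : 0 ≤ x) :
    bennettFun (r * x) ≤ r ^ 2 * bennettFun x := by
  refine hasSum_le (fun n ↦ ?_) (hasSum_bennettFun (r * x)) ((hasSum_bennettFun x).mul_left (r ^ 2))
  rw [← mul_div_assoc, mul_pow]
  gcongr ?_ * _ / _
  exact pow_le_pow_of_le_one hr0 hr1 (by lia)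

-- Every coefficient of the power series of `cosh √t` in `t` is nonnegative.
theorem convexOn_cosh_sqrt : ConvexOn ℝ (Set.Ici 0) fun t : ℝ ↦ cosh √t := by
  have hsum {t : ℝ} (ht : 0 ≤ t) :
      HasSum (fun n : ℕ ↦ t ^ n / (2 * n).factorial) (cosh √t) := by
    simpa only [pow_mul, sq_sqrt ht] using hasSum_cosh √t
  refine ⟨convex_Ici 0, fun u hu v hv a b ha hb hab ↦ ?_⟩
  refine hasSum_le (fun n ↦ ?_) (hsum (convex_Ici 0 hu hv ha hb hab))
    (((hsum hu).mul_left a).add ((hsum hv).mul_left b))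
  rw [← mul_div_assoc, ← mul_div_assoc, ← add_div]
  gcongr
  exact (convexOn_pow n).2 hu hv ha hb hab

-- `‖x + y‖²` is a convex combination of `(‖x‖ + ‖y‖)²` and `(‖x‖ - ‖y‖)²`.
theorem cosh_norm_add_le (x y : E) :
    cosh ‖x + y‖ ≤
      cosh ‖x‖ * cosh ‖y‖ + ⟪x, y⟫ * (sinh ‖x‖ / ‖x‖) * (sinh ‖y‖ / ‖y‖) := by
  rcases eq_or_ne x 0 with rfl | hx
  · simp
  rcases eq_or_ne y 0 with rfl | hy
  · simp
  set p := ⟪x, y⟫ / (‖x‖ * ‖y‖) with hp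
  have hp_le : |p| ≤ 1 := abs_real_inner_div_norm_mul_norm_le_one x y
  obtain ⟨hp_lower, hp_upper⟩ := abs_le.1 hp_le
  have hconv := convexOn_cosh_sqrt.2 (sq_nonneg (‖x‖ + ‖y‖)) (sq_nonneg (‖x‖ - ‖y‖))
    (by linarith : 0 ≤ (1 + p) / 2) (by linarith : 0 ≤ (1 - p) / 2) (by ring)
  have hsq : (1 + p) / 2 * (‖x‖ + ‖y‖) ^ 2 + (1 - p) / 2 * (‖x‖ - ‖y‖) ^ 2 = ‖x + y‖ ^ 2 := by
    rw [norm_add_sq_real, hp]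
    field_simp
    ring
  simp only [smul_eq_mul, hsq, sqrt_sq_eq_abs, abs_norm, cosh_abs, cosh_add, cosh_sub] at hconv
  refine hconv.trans_eq ?_
  rw [hp]
  field_simp
  ring

theorem mul_sinh_div_self (x : ℝ) : x * (sinh x / x) = sinh x :=
  mul_div_cancel_of_imp' fun h ↦ by simp [h]

theorem abs_inner_mul_sinh_div_le (x y : E) :
    |⟪x, y⟫ * (sinh ‖x‖ / ‖x‖)| ≤ cosh ‖x‖ * ‖y‖ := by
  have hsinh : 0 ≤ sinh ‖x‖ / ‖x‖ := div_nonneg (sinh_nonneg_iff.2 (norm_nonneg x)) (norm_nonneg x)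
  calc |⟪x, y⟫ * (sinh ‖x‖ / ‖x‖)| ≤ ‖x‖ * ‖y‖ * (sinh ‖x‖ / ‖x‖) := by
        rw [abs_mul, abs_of_nonneg hsinh]
        gcongr
        exact abs_real_inner_le_norm x y
    _ = sinh ‖x‖ * ‖y‖ := by rw [mul_right_comm, mul_sinh_div_self]
    _ ≤ cosh ‖x‖ * ‖y‖ := by
        gcongr
        exact (sinh_lt_cosh _).le

theorem cosh_norm_add_le_exp (x y : E) :
    cosh ‖x + y‖ ≤ cosh ‖x‖ * (1 + bennettFun ‖y‖) + ⟪x, y⟫ * (sinh ‖x‖ / ‖x‖) := by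
  rcases eq_or_ne y 0 with rfl | hy
  · simp [bennettFun]
  have hy_pos : 0 < ‖y‖ := norm_pos_iff.2 hy
  have hsinh : 0 ≤ sinh ‖y‖ / ‖y‖ - 1 := by
    rw [sub_nonneg, one_le_div hy_pos]
    exact self_le_sinh_iff.2 hy_pos.le
  have hexcess : ⟪x, y⟫ * (sinh ‖x‖ / ‖x‖) * (sinh ‖y‖ / ‖y‖ - 1) ≤
      cosh ‖x‖ * (sinh ‖y‖ - ‖y‖) :=
    calc ⟪x, y⟫ * (sinh ‖x‖ / ‖x‖) * (sinh ‖y‖ / ‖y‖ - 1)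
        ≤ cosh ‖x‖ * ‖y‖ * (sinh ‖y‖ / ‖y‖ - 1) :=
          mul_le_mul_of_nonneg_right (le_of_abs_le (abs_inner_mul_sinh_div_le x y)) hsinh
      _ = cosh ‖x‖ * (‖y‖ * (sinh ‖y‖ / ‖y‖) - ‖y‖) := by ring
      _ = cosh ‖x‖ * (sinh ‖y‖ - ‖y‖) := by rw [mul_sinh_div_self]
  rw [bennettFun, ← cosh_add_sinh ‖y‖]
  linarith [cosh_norm_add_le x y]

theorem cosh_norm_add_le_of_norm_le {b : ℝ} {x y : E} (hb : 0 < b) (hy : ‖y‖ ≤ b) :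
    cosh ‖x + y‖ ≤
      cosh ‖x‖ * (1 + ‖y‖ ^ 2 * (bennettFun b / b ^ 2)) + ⟪x, y⟫ * (sinh ‖x‖ / ‖x‖) := by
  have hbennett : bennettFun ‖y‖ ≤ ‖y‖ ^ 2 * (bennettFun b / b ^ 2) :=
    calc bennettFun ‖y‖ = bennettFun (‖y‖ / b * b) := by rw [div_mul_cancel₀ _ hb.ne']
      _ ≤ (‖y‖ / b) ^ 2 * bennettFun b :=
          bennettFun_mul_le (by positivity) ((div_le_one hb).2 hy) hb.le
      _ = ‖y‖ ^ 2 * (bennettFun b / b ^ 2) := by ring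
  refine (cosh_norm_add_le_exp x y).trans ?_
  gcongr

theorem cosh_norm_add_smul_le {B L e : ℝ} {x y : E} (hB : 0 < B) (hL : 0 < L) (he : |e| ≤ B)
    (hy : ‖y‖ ≤ L) :
    cosh ‖x + e • y‖ ≤
      cosh ‖x‖ + cosh ‖x‖ * (‖y‖ ^ 2 * (bennettFun (B * L) / (B * L) ^ 2)) * e ^ 2 +
        ⟪x, y⟫ * (sinh ‖x‖ / ‖x‖) * e := by
  have hnorm : ‖e • y‖ ≤ B * L := by
    rw [norm_smul]
    exact mul_le_mul he hy (norm_nonneg _) hB.le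
  refine (cosh_norm_add_le_of_norm_le (by positivity) hnorm).trans_eq ?_
  rw [norm_smul, inner_smul_right, mul_pow, norm_eq_abs, sq_abs]
  ring

end Hyperbolic

section InvSqrt

variable {H : Type*} [NormedAddCommGroup H] [InnerProductSpace ℝ H]

/-- `R` is a symmetric square root of the two-sided inverse of `A`. Positivity of `R` is not part
of the notion, so `R` need not be unique; `R ∘ R` is. -/
structure IsInvSqrt (A R : H →L[ℝ] H) : Prop where
  isSymmetric : (R : H →ₗ[ℝ] H).IsSymmetric
  apply_apply_apply : ∀ y, R (R (A y)) = y
  apply_apply_apply' : ∀ y, A (R (R y)) = y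

namespace IsInvSqrt

variable {A R R' : H →L[ℝ] H} {x : H}

theorem of_comp_self {Q Qinv : H →L[ℝ] H} (hQ : (Q : H →ₗ[ℝ] H).IsSymmetric)
    (hsq : Q ∘L Q = A) (hleft : Qinv ∘L Q = 1) (hright : Q ∘L Qinv = 1) : IsInvSqrt A Qinv := by
  have hl (y : H) : Qinv (Q y) = y := DFunLike.congr_fun hleft y
  have hr (y : H) : Q (Qinv y) = y := DFunLike.congr_fun hright y
  have hA (y : H) : Q (Q y) = A y := DFunLike.congr_fun hsq y
  refine ⟨fun y z ↦ ?_, fun y ↦ by rw [← hA, hl, hl], fun y ↦ by rw [← hA, hr, hr]⟩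
  have hQ_apply := hQ (Qinv y) (Qinv z)
  simp only [ContinuousLinearMap.coe_coe, hr] at hQ_apply ⊢
  exact hQ_apply.symm

theorem inner_apply_apply (h : IsInvSqrt A R) (y z : H) : ⟪R y, R z⟫ = ⟪y, R (R z)⟫ :=
  h.isSymmetric y (R z)

theorem apply_apply_eq_inverse (h : IsInvSqrt A R) (y : H) : R (R y) = Ring.inverse A y := by
  let u : (H →L[ℝ] H)ˣ :=
    ⟨A, R ∘L R, ContinuousLinearMap.ext h.apply_apply_apply',
      ContinuousLinearMap.ext h.apply_apply_apply⟩
  exact DFunLike.congr_fun (Ring.inverse_unit u).symm y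

/-- The **Sherman–Morrison formula**. -/
theorem apply_apply_add_outerProd (h : IsInvSqrt A R) (h' : IsInvSqrt (A + outerProd x) R')
    (y : H) :
    R' (R' y) = R (R y) - (⟪R x, R y⟫ / (1 + ‖R x‖ ^ 2)) • R (R x) := by
  set z := R' (R' y)
  have hy : A z + ⟪x, z⟫ • x = y := by simpa [outerProd] using h'.apply_apply_apply' y
  have hRy : R (R y) = z + ⟪x, z⟫ • R (R x) := by
    rw [← hy, map_add, map_add, h.apply_apply_apply, map_smul, map_smul]
  have hinner : ⟪R x, R y⟫ = ⟪x, z⟫ * (1 + ‖R x‖ ^ 2) := by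
    rw [h.inner_apply_apply, hRy, inner_add_right, inner_smul_right, ← h.inner_apply_apply,
      real_inner_self_eq_norm_sq]
    ring
  rw [hinner, mul_div_cancel_right₀ _ (by positivity), hRy, add_sub_cancel_right]

theorem norm_apply_add_outerProd_sq (h : IsInvSqrt A R) (h' : IsInvSqrt (A + outerProd x) R')
    (y : H) : ‖R' y‖ ^ 2 = ‖R y‖ ^ 2 - ⟪R x, R y⟫ ^ 2 / (1 + ‖R x‖ ^ 2) := by
  rw [← real_inner_self_eq_norm_sq (R' y), h'.inner_apply_apply, h.apply_apply_add_outerProd h',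
    inner_sub_right, inner_smul_right, ← h.inner_apply_apply, ← h.inner_apply_apply,
    real_inner_self_eq_norm_sq, real_inner_comm (R x)]
  ring

theorem norm_apply_add_outerProd_le (h : IsInvSqrt A R) (h' : IsInvSqrt (A + outerProd x) R')
    (y : H) : ‖R' y‖ ≤ ‖R y‖ := by
  refine le_of_sq_le_sq ?_ (norm_nonneg _)
  rw [h.norm_apply_add_outerProd_sq h']
  exact sub_le_self _ (by positivity)

theorem norm_apply_self_le_one (h : IsInvSqrt A R) (h' : IsInvSqrt (A + outerProd x) R') :
    ‖R' x‖ ≤ 1 := by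
  refine (sq_le_one_iff₀ (norm_nonneg _)).1 ?_
  rw [h.norm_apply_add_outerProd_sq h', real_inner_self_eq_norm_sq]
  field_simp
  linarith [sq_nonneg ‖R x‖]

end IsInvSqrt

end InvSqrt

section CondExp

variable {Ω : Type*} {m m0 : MeasurableSpace Ω} {μ : Measure Ω}

theorem condExp_add_mul_sq_add_mul_le [IsFiniteMeasure μ] {a b c e : Ω → ℝ} {v : ℝ} (hm : m ≤ m0)
    (ha : StronglyMeasurable[m] a) (hb : StronglyMeasurable[m] b) (hc : StronglyMeasurable[m] c)
    (ha_int : Integrable a μ) (hb_int : Integrable (b * e ^ 2) μ) (hc_int : Integrable (c * e) μ)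
    (he : MemLp e 2 μ) (hb_nonneg : 0 ≤ b) (he_mean : μ[e | m] =ᵐ[μ] 0)
    (he_sq : μ[e ^ 2 | m] ≤ᵐ[μ] fun _ ↦ v) :
    μ[a + b * e ^ 2 + c * e | m] ≤ᵐ[μ] fun ω ↦ a ω + b ω * v := by
  filter_upwards [condExp_add (ha_int.add hb_int) hc_int m, condExp_add ha_int hb_int m,
    condExp_mul_of_stronglyMeasurable_left hb hb_int he.integrable_sq,
    condExp_mul_of_stronglyMeasurable_left hc hc_int (he.integrable one_le_two), he_mean, he_sq]
    with ω hadd hadd' hpull_b hpull_c hmean hsq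
  rw [hadd, Pi.add_apply, hadd', Pi.add_apply, hpull_b, hpull_c, Pi.mul_apply, Pi.mul_apply, hmean,
    condExp_of_stronglyMeasurable hm ha ha_int, Pi.zero_apply, mul_zero, add_zero]
  gcongr
  exact hb_nonneg ω

theorem condExp_sq_eq_condVar [IsFiniteMeasure μ] {e : Ω → ℝ} (hm : m ≤ m0)
    (he : MemLp e 2 μ) (he_mean : μ[e | m] =ᵐ[μ] 0) : μ[e ^ 2 | m] =ᵐ[μ] Var[e; μ | m] := by
  filter_upwards [condVar_ae_eq_condExp_sq_sub_sq_condExp hm he, he_mean] with ω hvar hmean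
  simp [hvar, hmean]

variable {E : Type*} [NormedAddCommGroup E] [InnerProductSpace ℝ E]

theorem condExp_cosh_norm_add_smul_le [IsFiniteMeasure μ] {y z : Ω → E} {e : Ω → ℝ}
    {B K L v : ℝ} (hm : m ≤ m0) (hy : StronglyMeasurable[m] fun ω ↦ ‖y ω‖)
    (hz : StronglyMeasurable[m] fun ω ↦ ‖z ω‖)
    (hyz : StronglyMeasurable[m] fun ω ↦ ⟪y ω, z ω⟫)
    (hint : Integrable (fun ω ↦ cosh ‖y ω + e ω • z ω‖) μ)
    (he : AEStronglyMeasurable e μ) (hB : 0 < B) (hL : 0 < L)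
    (hyK : ∀ᵐ ω ∂μ, ‖y ω‖ ≤ K) (hzL : ∀ ω, ‖z ω‖ ≤ L) (heB : ∀ᵐ ω ∂μ, |e ω| ≤ B)
    (he_mean : μ[e | m] =ᵐ[μ] 0) (he_sq : μ[e ^ 2 | m] ≤ᵐ[μ] fun _ ↦ v) :
    μ[fun ω ↦ cosh ‖y ω + e ω • z ω‖ | m] ≤ᵐ[μ] fun ω ↦
      cosh ‖y ω‖ * (1 + v * ‖z ω‖ ^ 2 * (bennettFun (B * L) / (B * L) ^ 2)) := by
  set k := bennettFun (B * L) / (B * L) ^ 2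
  let a ω := cosh ‖y ω‖
  let b ω := cosh ‖y ω‖ * (‖z ω‖ ^ 2 * k)
  let c ω := ⟪y ω, z ω⟫ * (sinh ‖y ω‖ / ‖y ω‖)
  have ha : StronglyMeasurable[m] a := continuous_cosh.comp_stronglyMeasurable hy
  have hb : StronglyMeasurable[m] b := ha.mul ((hz.pow 2).mul_const k)
  have hc : StronglyMeasurable[m] c :=
    hyz.mul ((continuous_sinh.comp_stronglyMeasurable hy).div hy)
  have hk : 0 ≤ k := div_nonneg (bennettFun_nonneg _) (sq_nonneg _)
  have hb_nonneg : 0 ≤ b := fun ω ↦ by positivity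
  have ha_le : ∀ᵐ ω ∂μ, a ω ≤ cosh K := by
    filter_upwards [hyK] with ω hω
    rw [cosh_le_cosh, abs_norm]
    exact hω.trans (le_abs_self K)
  have hb_le : ∀ᵐ ω ∂μ, ‖b ω‖ ≤ cosh K * (L ^ 2 * k) := by
    filter_upwards [ha_le] with ω hω
    rw [norm_of_nonneg (hb_nonneg ω)]
    exact mul_le_mul hω (by gcongr; exact hzL ω) (by positivity) (cosh_pos _).le
  have hc_le : ∀ᵐ ω ∂μ, ‖c ω‖ ≤ cosh K * L := by
    filter_upwards [ha_le] with ω hω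
    exact (abs_inner_mul_sinh_div_le _ _).trans (mul_le_mul hω (hzL ω) (norm_nonneg _)
      (cosh_pos _).le)
  have he_memLp : MemLp e 2 μ := .of_bound he B heB
  have hdom : (fun ω ↦ cosh ‖y ω + e ω • z ω‖) ≤ᵐ[μ] a + b * e ^ 2 + c * e :=
    heB.mono fun ω hω ↦ cosh_norm_add_smul_le hB hL hω (hzL ω)
  have ha_int : Integrable a μ := .of_bound (ha.mono hm).aestronglyMeasurable (cosh K) <| by
    simpa only [norm_of_nonneg (cosh_pos _).le, a] using ha_le
  have hb_int : Integrable (b * e ^ 2) μ :=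
    he_memLp.integrable_sq.bdd_mul (hb.mono hm).aestronglyMeasurable hb_le
  have hc_int : Integrable (c * e) μ :=
    (he_memLp.integrable one_le_two).bdd_mul (hc.mono hm).aestronglyMeasurable hc_le
  filter_upwards [condExp_mono (m := m) hint ((ha_int.add hb_int).add hc_int) hdom,
    condExp_add_mul_sq_add_mul_le hm ha hb hc ha_int hb_int hc_int he_memLp hb_nonneg he_mean he_sq]
    with ω hmono hle
  exact (hmono.trans hle).trans_eq (by ring)

end CondExp

section LSupermartingale

variable {Ω : Type*} {m0 : MeasurableSpace Ω} {μ : Measure Ω} {ℱ : Filtration ℕ m0}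

theorem mul_measure_union_add_setLIntegral_le {g h : Ω → ℝ≥0∞} {S : Set Ω} {c : ℝ≥0∞}
    (hg : Measurable g)
    (hgh : ∫⁻ ω in Sᶜ, g ω ∂μ ≤ ∫⁻ ω in Sᶜ, h ω ∂μ) :
    c * μ (S ∪ {ω | c ≤ g ω}) + ∫⁻ ω in (S ∪ {ω | c ≤ g ω})ᶜ, g ω ∂μ ≤
      c * μ S + ∫⁻ ω in Sᶜ, h ω ∂μ := by
  set T := {ω | c ≤ g ω}
  have hT : MeasurableSet T := measurableSet_le measurable_const hg
  have hmarkov : c * μ (Sᶜ ∩ T) ≤ ∫⁻ ω in Sᶜ ∩ T, g ω ∂μ := by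
    rw [← setLIntegral_const]
    exact setLIntegral_mono hg fun _ hω ↦ hω.2
  calc c * μ (S ∪ T) + ∫⁻ ω in (S ∪ T)ᶜ, g ω ∂μ
      ≤ c * (μ S + μ (Sᶜ ∩ T)) + ∫⁻ ω in Sᶜ \ T, g ω ∂μ := by
        rw [Set.compl_union, Set.sdiff_eq, ← Set.union_sdiff_self, Set.sdiff_eq, Set.inter_comm T]
        gcongr
        exact measure_union_le _ _
    _ ≤ c * μ S + ∫⁻ ω in Sᶜ, g ω ∂μ := by
        rw [mul_add, add_assoc, ← lintegral_inter_add_sdiff g Sᶜ hT]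
        gcongr
    _ ≤ c * μ S + ∫⁻ ω in Sᶜ, h ω ∂μ := by gcongr

/-- A nonnegative supermartingale with values in `ℝ≥0∞`; integrability is not required. -/
structure IsLSupermartingale (f : ℕ → Ω → ℝ≥0∞) (ℱ : Filtration ℕ m0) (μ : Measure Ω) :
    Prop where
  measurable : ∀ n, Measurable[ℱ n] (f n)
  setLIntegral_succ_le : ∀ n A, MeasurableSet[ℱ n] A →
    ∫⁻ ω in A, f (n + 1) ω ∂μ ≤ ∫⁻ ω in A, f n ω ∂μ

theorem isLSupermartingale_ofReal [SigmaFiniteFiltration μ ℱ] {f : ℕ → Ω → ℝ}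
    (hf : Supermartingale f ℱ μ) (hf_nonneg : ∀ n, 0 ≤ f n) :
    IsLSupermartingale (fun n ω ↦ ENNReal.ofReal (f n ω)) ℱ μ where
  measurable n := (hf.stronglyMeasurable n).measurable.ennreal_ofReal
  setLIntegral_succ_le n A hA := by
    have hint k := (hf.integrable k).integrableOn (s := A)
    rw [← ofReal_integral_eq_lintegral_ofReal (hint _) (ae_of_all _ (hf_nonneg _)),
      ← ofReal_integral_eq_lintegral_ofReal (hint _) (ae_of_all _ (hf_nonneg _))]
    exact ENNReal.ofReal_le_ofReal (hf.setIntegral_le n.le_succ hA)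

namespace IsLSupermartingale

theorem lintegral {Λ : Type*} {mΛ : MeasurableSpace Λ} {κ : Measure Λ} [SFinite κ] [SFinite μ]
    {f : Λ → ℕ → Ω → ℝ≥0∞}
    (hmeas : ∀ n, Measurable[(ℱ n).prod mΛ] fun p : Ω × Λ ↦ f p.2 n p.1)
    (hf : ∀ᵐ l ∂κ, IsLSupermartingale (f l) ℱ μ) :
    IsLSupermartingale (fun n ω ↦ ∫⁻ l, f l n ω ∂κ) ℱ μ where
  measurable n := @Measurable.lintegral_prod_right' Ω Λ (ℱ n) mΛ κ _ _ (hmeas n)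
  setLIntegral_succ_le n A hA := by
    have hmeas' k : Measurable fun p : Ω × Λ ↦ f p.2 k p.1 :=
      (hmeas k).mono (sup_le_sup_right (MeasurableSpace.comap_mono (ℱ.le k)) _) le_rfl
    have hswap k : ∫⁻ ω in A, ∫⁻ l, f l k ω ∂κ ∂μ = ∫⁻ l, ∫⁻ ω in A, f l k ω ∂μ ∂κ :=
      lintegral_lintegral_swap (hmeas' k).aemeasurable
    rw [hswap, hswap]
    exact lintegral_mono_ae (hf.mono fun l hl ↦ hl.setLIntegral_succ_le n A hA)

variable {f : ℕ → Ω → ℝ≥0∞}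

theorem mul_measure_accumulate_add_setLIntegral_le (hf : IsLSupermartingale f ℱ μ) (c : ℝ≥0∞)
    (n : ℕ) :
    c * μ (Set.accumulate (fun k ↦ {ω | c ≤ f k ω}) n) +
      ∫⁻ ω in (Set.accumulate (fun k ↦ {ω | c ≤ f k ω}) n)ᶜ, f n ω ∂μ ≤ ∫⁻ ω, f 0 ω ∂μ := by
  have hmeas k : Measurable (f k) := (hf.measurable k).mono (ℱ.le k) le_rfl
  induction n with
  | zero =>
    simpa only [Set.empty_union, measure_empty, mul_zero, zero_add, Set.compl_empty,
      setLIntegral_univ, Set.accumulate_zero_nat] using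
      mul_measure_union_add_setLIntegral_le (S := ∅) (c := c) (hmeas 0) le_rfl
  | succ n ih =>
    have hS : MeasurableSet[ℱ n] (Set.accumulate (fun k ↦ {ω | c ≤ f k ω}) n) := by
      refine MeasurableSet.biUnion (Set.to_countable _) fun k hk ↦ ?_
      exact ℱ.mono hk _ (measurableSet_le (mδ := ℱ k) measurable_const (hf.measurable k))
    rw [Set.accumulate_succ]
    exact (mul_measure_union_add_setLIntegral_le (hmeas (n + 1))
      (hf.setLIntegral_succ_le n _ hS.compl)).trans ih

/-- **Ville's maximal inequality**. -/
theorem mul_measure_exists_le (hf : IsLSupermartingale f ℱ μ) (c : ℝ≥0∞) :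
    c * μ {ω | ∃ n, c ≤ f n ω} ≤ ∫⁻ ω, f 0 ω ∂μ := by
  have hunion : {ω | ∃ n, c ≤ f n ω} = ⋃ n, Set.accumulate (fun k ↦ {ω | c ≤ f k ω}) n := by
    rw [Set.iUnion_accumulate]
    ext
    simp
  rw [hunion, Set.monotone_accumulate.measure_iUnion, ENNReal.mul_iSup]
  exact iSup_le fun n ↦ le_self_add.trans (hf.mul_measure_accumulate_add_setLIntegral_le c n)

theorem measure_exists_inv_le (hf : IsLSupermartingale f ℱ μ) (hf0 : ∫⁻ ω, f 0 ω ∂μ ≤ 1)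
    (c : ℝ≥0∞) : μ {ω | ∃ n, c⁻¹ ≤ f n ω} ≤ c := by
  rw [← inv_inv c, ENNReal.le_inv_iff_mul_le, inv_inv, mul_comm]
  exact (hf.mul_measure_exists_le c⁻¹).trans hf0

end IsLSupermartingale

end LSupermartingale

section LogGammaTail

theorem Gamma_mul_upperGammaReg_div_rpow {a c : ℝ} (ha : 0 < a) (hc : 0 < c) :
    Gamma a * upperGammaReg a c / c ^ a = ∫ l in Set.Ioi 0, exp (a * l - c * exp l) := by
  have : 0 < c ^ a := rpow_pos_of_pos hc a
  have hscale : ∫ u in Set.Ioi c, u ^ (a - 1) * exp (-u) =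
      c * ∫ v in Set.Ioi 1, (c * v) ^ (a - 1) * exp (-(c * v)) := by
    rw [integral_comp_mul_left_Ioi (fun u ↦ u ^ (a - 1) * exp (-u)) 1 hc, mul_one, smul_eq_mul,
      mul_inv_cancel_left₀ hc.ne']
  rw [upperGammaReg, mul_div_cancel₀ _ (Gamma_pos_of_pos ha).ne', hscale, ← exp_zero,
    ← integral_comp_exp_Ioi, ← integral_const_mul, ← integral_div]
  refine setIntegral_congr_fun measurableSet_Ioi fun l _ ↦ ?_
  rw [exp_zero, smul_eq_mul, mul_rpow hc.le (exp_pos l).le, ← exp_mul,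
    show a * l - c * exp l = l + l * (a - 1) + -(c * exp l) by ring, exp_add, exp_add,
    rpow_sub_one hc.ne']
  field_simp

/-- For `0 < a`, the law of `log (U / a)` where `U` is Gamma distributed with shape `a` and
conditioned on `a < U`. -/
noncomputable def logGammaTail (a : ℝ) : Measure ℝ :=
  (volume.restrict (Set.Ioi 0)).tilted fun l ↦ a * (l - exp l)

instance (a : ℝ) : IsZeroOrProbabilityMeasure (logGammaTail a) :=
  isZeroOrProbabilityMeasure_tilted

theorem ae_pos_logGammaTail (a : ℝ) : ∀ᵐ l ∂logGammaTail a, 0 < l :=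
  (tilted_absolutelyContinuous _ _).ae_le (ae_restrict_mem measurableSet_Ioi)

theorem mixedBennettExpr_eq_integral {B θ ν s : ℝ} (hB : 0 < B) (hθ : 0 < θ) (hν : 0 ≤ ν)
    (hs : 0 ≤ s) :
    mixedBennettExpr B θ ν s =
      ∫ l, exp (l / B * s - ν / B ^ 2 * bennettFun l) ∂logGammaTail (θ / B ^ 2) := by
  have hnorm : (θ / B ^ 2) ^ (θ / B ^ 2) /
      (Gamma (θ / B ^ 2) * upperGammaReg (θ / B ^ 2) (θ / B ^ 2)) =
        (∫ l in Set.Ioi 0, exp (θ / B ^ 2 * (l - exp l)))⁻¹ := by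
    simp only [mul_sub]
    rw [← Gamma_mul_upperGammaReg_div_rpow (by positivity) (by positivity), inv_div]
  rw [mixedBennettExpr, hnorm, Gamma_mul_upperGammaReg_div_rpow (by positivity) (by positivity),
    logGammaTail, integral_tilted, ← integral_const_mul, ← integral_mul_const]
  refine setIntegral_congr_fun measurableSet_Ioi fun l _ ↦ ?_
  rw [smul_eq_mul, mul_assoc, ← exp_add, inv_mul_eq_div, div_mul_eq_mul_div (exp _), ← exp_add]
  congr 2
  unfold bennettFun
  field_simp
  ring

/-- The weight `cosh (λ s) exp (-ψ(λ) ν)` at `λ = l / B` of a vector of norm `s` and energy `ν`,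
where `ψ(λ) = bennettFun (λ B) / B²`. It is a supermartingale along the self-normalised process. -/
noncomputable def coshWeight (B l s ν : ℝ) : ℝ :=
  cosh (l / B * s) * exp (-(ν / B ^ 2 * bennettFun l))

/-- The weights `coshWeight B l s ν` averaged over `l ∼ logGammaTail (θ / B²)`. -/
noncomputable def coshMixture (B θ s ν : ℝ) : ℝ≥0∞ :=
  ∫⁻ l, ENNReal.ofReal (coshWeight B l s ν) ∂logGammaTail (θ / B ^ 2)

theorem continuous_coshWeight (B : ℝ) :
    Continuous fun p : (ℝ × ℝ) × ℝ ↦ coshWeight B p.2 p.1.1 p.1.2 := by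
  have := continuous_bennettFun
  unfold coshWeight
  fun_prop

theorem coshMixture_zero_zero_le_one (B θ : ℝ) : coshMixture B θ 0 0 ≤ 1 := by
  simpa [coshMixture, coshWeight] using prob_le_one

theorem coshWeight_nonneg (B l s ν : ℝ) : 0 ≤ coshWeight B l s ν :=
  mul_nonneg (cosh_pos _).le (exp_pos _).le

theorem exp_le_two_mul_coshWeight {B l s ν ν' : ℝ} (hν : ν ≤ ν') :
    exp (l / B * s - ν' / B ^ 2 * bennettFun l) ≤ 2 * coshWeight B l s ν := by
  have hcosh : exp (l / B * s) ≤ 2 * cosh (l / B * s) := by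
    rw [cosh_eq, mul_div_cancel₀ _ two_ne_zero]
    exact le_add_of_nonneg_right (exp_pos _).le
  rw [sub_eq_add_neg, exp_add, coshWeight, ← mul_assoc]
  gcongr
  exact bennettFun_nonneg l

theorem ofReal_mixedBennettExpr_le {B θ ν ν' s : ℝ} (hB : 0 < B) (hθ : 0 < θ) (hν' : 0 ≤ ν')
    (hs : 0 ≤ s) (hν : ν ≤ ν') :
    ENNReal.ofReal (mixedBennettExpr B θ ν' s) ≤ 2 * coshMixture B θ s ν := by
  rw [mixedBennettExpr_eq_integral hB hθ hν' hs, coshMixture, ← lintegral_const_mul' _ _ (by simp)]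
  refine (Real.ofReal_le_enorm _).trans ((enorm_integral_le_lintegral_enorm _).trans ?_)
  refine lintegral_mono fun l ↦ ?_
  rw [Real.enorm_of_nonneg (exp_pos _).le, ← ENNReal.ofReal_ofNat, ← ENNReal.ofReal_mul zero_le_two]
  exact ENNReal.ofReal_le_ofReal (exp_le_two_mul_coshWeight hν)

theorem mixedBennettExpr_lt_of_coshMixture_lt {B θ ν ν' s δ : ℝ} (hB : 0 < B) (hθ : 0 < θ)
    (hδ : 0 < δ) (hs : 0 ≤ s) (hν' : 0 ≤ ν') (hν : ν ≤ ν')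
    (hlt : coshMixture B θ s ν < (ENNReal.ofReal δ)⁻¹) : mixedBennettExpr B θ ν' s < 2 / δ := by
  rw [← ENNReal.ofReal_lt_ofReal_iff (by positivity), ENNReal.ofReal_div_of_pos hδ,
    ENNReal.ofReal_ofNat, div_eq_mul_inv]
  exact (ofReal_mixedBennettExpr_le hB hθ hν' hs hν).trans_lt
    (ENNReal.mul_lt_mul_right two_ne_zero ENNReal.ofNat_ne_top hlt)

end LogGammaTail

section SelfNormalized

variable {H : Type*} [NormedAddCommGroup H] [InnerProductSpace ℝ H] {Ω : Type*}

/-- The Gram operator `∑_{i ≤ t} X_i X_iᵀ` regularised by `V₀`, which is `ρI` in ridge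
regression. -/
noncomputable def regGram (V₀ : H →L[ℝ] H) (X : ℕ → Ω → H) (t : ℕ) (ω : Ω) : H →L[ℝ] H :=
  V₀ + ∑ i ∈ Finset.Icc 1 t, outerProd (X i ω)

/-- The martingale transform `M_t = ∑_{i ≤ t} ε_i X_i`. -/
noncomputable def noiseSum (X : ℕ → Ω → H) (ε : ℕ → Ω → ℝ) (t : ℕ) (ω : Ω) : H :=
  ∑ i ∈ Finset.Icc 1 t, ε i ω • X i ω

/-- The self-normalised statistic `s_t = ‖R_t M_t‖`. -/
noncomputable def selfNorm (R : ℕ → Ω → H →L[ℝ] H) (X : ℕ → Ω → H) (ε : ℕ → Ω → ℝ) (t : ℕ)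
    (ω : Ω) : ℝ :=
  ‖R t ω (noiseSum X ε t ω)‖

/-- The cumulated energy `∑_{i ≤ t} ‖G_i‖²` of the normalised covariates `G_i = R_i X_i`. -/
noncomputable def cumEnergy (R : ℕ → Ω → H →L[ℝ] H) (X : ℕ → Ω → H) (t : ℕ) (ω : Ω) : ℝ :=
  ∑ i ∈ Finset.Icc 1 t, ‖R i ω (X i ω)‖ ^ 2

variable {V₀ : H →L[ℝ] H} {R : ℕ → Ω → H →L[ℝ] H} {X : ℕ → Ω → H} {ε : ℕ → Ω → ℝ} {n : ℕ}

theorem selfNorm_succ (n : ℕ) (ω : Ω) :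
    selfNorm R X ε (n + 1) ω =
      ‖R (n + 1) ω (noiseSum X ε n ω) + ε (n + 1) ω • R (n + 1) ω (X (n + 1) ω)‖ := by
  rw [selfNorm, noiseSum, Finset.sum_Icc_succ_top n.succ_pos, map_add, map_smul, noiseSum]

theorem cumEnergy_succ (n : ℕ) (ω : Ω) :
    cumEnergy R X (n + 1) ω = cumEnergy R X n ω + ‖R (n + 1) ω (X (n + 1) ω)‖ ^ 2 :=
  Finset.sum_Icc_succ_top n.succ_pos _

theorem cumEnergy_nonneg (n : ℕ) (ω : Ω) : 0 ≤ cumEnergy R X n ω :=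
  Finset.sum_nonneg fun _ _ ↦ sq_nonneg _

theorem isInvSqrt_succ (hR : ∀ t ω, IsInvSqrt (regGram V₀ X t ω) (R t ω)) (n : ℕ) (ω : Ω) :
    IsInvSqrt (regGram V₀ X n ω + outerProd (X (n + 1) ω)) (R (n + 1) ω) := by
  have hsucc : regGram V₀ X (n + 1) ω = regGram V₀ X n ω + outerProd (X (n + 1) ω) := by
    rw [regGram, regGram, Finset.sum_Icc_succ_top n.succ_pos, add_assoc]
  exact hsucc ▸ hR (n + 1) ω

theorem norm_apply_succ_noiseSum_le (hR : ∀ t ω, IsInvSqrt (regGram V₀ X t ω) (R t ω)) (n : ℕ)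
    (ω : Ω) : ‖R (n + 1) ω (noiseSum X ε n ω)‖ ≤ selfNorm R X ε n ω :=
  (hR n ω).norm_apply_add_outerProd_le (isInvSqrt_succ hR n ω) _

theorem norm_apply_succ_le_one (hR : ∀ t ω, IsInvSqrt (regGram V₀ X t ω) (R t ω)) (n : ℕ)
    (ω : Ω) : ‖R (n + 1) ω (X (n + 1) ω)‖ ≤ 1 :=
  (hR n ω).norm_apply_self_le_one (isInvSqrt_succ hR n ω)

section Measurability

variable {m : MeasurableSpace Ω} {y z : Ω → H}

-- A measurable square root is not available; `R_n ∘ R_n` is built up from the constant operator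
-- `V₀⁻¹` by rank-one updates.
theorem stronglyMeasurable_apply_apply (hR : ∀ t ω, IsInvSqrt (regGram V₀ X t ω) (R t ω))
    (hX : ∀ i ∈ Finset.Icc 1 n, StronglyMeasurable[m] (X i)) (hy : StronglyMeasurable[m] y) :
    StronglyMeasurable[m] fun ω ↦ R n ω (R n ω (y ω)) := by
  induction n generalizing y with
  | zero =>
    simp only [(hR 0 _).apply_apply_eq_inverse, regGram, zero_lt_one, Finset.Icc_eq_empty_of_lt,
      Finset.sum_empty, add_zero]
    exact (Ring.inverse V₀).continuous.comp_stronglyMeasurable hy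
  | succ n ih =>
    have hx := hX (n + 1) (by simp)
    have ih {y : Ω → H} (hy : StronglyMeasurable[m] y) :=
      ih (fun i hi ↦ hX i (Finset.Icc_subset_Icc_right n.le_succ hi)) hy
    simp only [(hR n _).apply_apply_add_outerProd (isInvSqrt_succ hR n _),
      (hR n _).inner_apply_apply, ← real_inner_self_eq_norm_sq]
    exact (ih hy).sub (((hx.inner (ih hy)).div
      (stronglyMeasurable_const.add (hx.inner (ih hx)))).smul (ih hx))

theorem stronglyMeasurable_inner_apply (hR : ∀ t ω, IsInvSqrt (regGram V₀ X t ω) (R t ω))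
    (hX : ∀ i ∈ Finset.Icc 1 n, StronglyMeasurable[m] (X i)) (hy : StronglyMeasurable[m] y)
    (hz : StronglyMeasurable[m] z) :
    StronglyMeasurable[m] fun ω ↦ ⟪R n ω (y ω), R n ω (z ω)⟫ := by
  simp only [(hR n _).inner_apply_apply]
  exact hy.inner (stronglyMeasurable_apply_apply hR hX hz)

theorem stronglyMeasurable_norm_apply (hR : ∀ t ω, IsInvSqrt (regGram V₀ X t ω) (R t ω))
    (hX : ∀ i ∈ Finset.Icc 1 n, StronglyMeasurable[m] (X i)) (hy : StronglyMeasurable[m] y) :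
    StronglyMeasurable[m] fun ω ↦ ‖R n ω (y ω)‖ := by
  simp only [norm_eq_sqrt_real_inner]
  exact continuous_sqrt.comp_stronglyMeasurable (stronglyMeasurable_inner_apply hR hX hy hy)

theorem stronglyMeasurable_cumEnergy (hR : ∀ t ω, IsInvSqrt (regGram V₀ X t ω) (R t ω))
    (hX : ∀ i ∈ Finset.Icc 1 n, StronglyMeasurable[m] (X i)) :
    StronglyMeasurable[m] (cumEnergy R X n) :=
  Finset.stronglyMeasurable_fun_sum _ fun i hi ↦
    (stronglyMeasurable_norm_apply hR
      (fun j hj ↦ hX j (Finset.Icc_subset_Icc_right (Finset.mem_Icc.1 hi).2 hj)) (hX i hi)).pow 2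

end Measurability

variable {m0 : MeasurableSpace Ω} {μ : Measure Ω} {ℱ : Filtration ℕ m0} {B σ l : ℝ}

/-- `ε` is a martingale difference sequence, bounded by `B` almost surely and of conditional
variance at most `σ²`. The times start at `1`, so `ε 0` is irrelevant. -/
structure IsBoundedNoise (ε : ℕ → Ω → ℝ) (ℱ : Filtration ℕ m0) (μ : Measure Ω) (B σ : ℝ) :
    Prop where
  stronglyMeasurable : ∀ n, StronglyMeasurable[ℱ (n + 1)] (ε (n + 1))
  abs_le : ∀ n, ∀ᵐ ω ∂μ, |ε (n + 1) ω| ≤ B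
  condExp_eq_zero : ∀ n, μ[ε (n + 1) | ℱ n] =ᵐ[μ] 0
  condExp_sq_le : ∀ n, μ[ε (n + 1) ^ 2 | ℱ n] ≤ᵐ[μ] fun _ ↦ σ ^ 2

theorem stronglyMeasurable_of_mem_Icc_succ {E : Type*} [TopologicalSpace E] {Y : ℕ → Ω → E} {i : ℕ}
    (hY : ∀ n, StronglyMeasurable[ℱ n] (Y (n + 1))) (hi : i ∈ Finset.Icc 1 (n + 1)) :
    StronglyMeasurable[ℱ n] (Y i) := by
  obtain ⟨hi_pos, hi_le⟩ := Finset.mem_Icc.1 hi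
  obtain ⟨j, rfl⟩ := Nat.exists_eq_add_of_le' hi_pos
  exact (hY j).mono (ℱ.mono (Nat.le_of_succ_le_succ hi_le))

theorem stronglyMeasurable_of_mem_Icc {E : Type*} [TopologicalSpace E] {Y : ℕ → Ω → E} {i : ℕ}
    (hY : ∀ n, StronglyMeasurable[ℱ n] (Y (n + 1))) (hi : i ∈ Finset.Icc 1 n) :
    StronglyMeasurable[ℱ n] (Y i) :=
  stronglyMeasurable_of_mem_Icc_succ hY (Finset.Icc_subset_Icc_right n.le_succ hi)

namespace IsBoundedNoise

theorem of_condVar_le [IsFiniteMeasure μ] (hmeas : ∀ t, 1 ≤ t → StronglyMeasurable[ℱ t] (ε t))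
    (hbdd : ∀ t, 1 ≤ t → ∀ᵐ ω ∂μ, |ε t ω| ≤ B)
    (hmean : ∀ t, 1 ≤ t → μ[ε t | ℱ (t - 1)] =ᵐ[μ] 0)
    (hvar : ∀ t, 1 ≤ t → Var[ε t; μ | ℱ (t - 1)] ≤ᵐ[μ] fun _ ↦ σ ^ 2) :
    IsBoundedNoise ε ℱ μ B σ where
  stronglyMeasurable n := hmeas (n + 1) n.succ_pos
  abs_le n := hbdd (n + 1) n.succ_pos
  condExp_eq_zero n := hmean (n + 1) n.succ_pos
  condExp_sq_le n := by
    have hmemLp : MemLp (ε (n + 1)) 2 μ :=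
      .of_bound ((hmeas _ n.succ_pos).mono (ℱ.le _)).aestronglyMeasurable B (hbdd _ n.succ_pos)
    exact (condExp_sq_eq_condVar (ℱ.le n) hmemLp (hmean _ n.succ_pos)).trans_le
      (hvar _ n.succ_pos)

theorem stronglyMeasurable_noiseSum (hε : IsBoundedNoise ε ℱ μ B σ)
    (hX : ∀ n, StronglyMeasurable[ℱ n] (X (n + 1))) (n : ℕ) :
    StronglyMeasurable[ℱ n] (noiseSum X ε n) := by
  refine Finset.stronglyMeasurable_fun_sum _ fun i hi ↦ ?_
  refine .smul ?_ (stronglyMeasurable_of_mem_Icc hX hi)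
  obtain ⟨hi_pos, hi_le⟩ := Finset.mem_Icc.1 hi
  obtain ⟨j, rfl⟩ := Nat.exists_eq_add_of_le' hi_pos
  exact (hε.stronglyMeasurable j).mono (ℱ.mono hi_le)

theorem stronglyMeasurable_selfNorm (hε : IsBoundedNoise ε ℱ μ B σ)
    (hR : ∀ t ω, IsInvSqrt (regGram V₀ X t ω) (R t ω))
    (hX : ∀ n, StronglyMeasurable[ℱ n] (X (n + 1))) (n : ℕ) :
    StronglyMeasurable[ℱ n] (selfNorm R X ε n) :=
  stronglyMeasurable_norm_apply hR (fun _ ↦ stronglyMeasurable_of_mem_Icc hX)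
    (hε.stronglyMeasurable_noiseSum hX n)

theorem selfNorm_le (hε : IsBoundedNoise ε ℱ μ B σ)
    (hR : ∀ t ω, IsInvSqrt (regGram V₀ X t ω) (R t ω)) (n : ℕ) :
    ∀ᵐ ω ∂μ, selfNorm R X ε n ω ≤ n * B := by
  induction n with
  | zero => simp [selfNorm, noiseSum]
  | succ n ih =>
    filter_upwards [ih, hε.abs_le n] with ω hprev hε_le
    calc selfNorm R X ε (n + 1) ω
        ≤ ‖R (n + 1) ω (noiseSum X ε n ω)‖ + |ε (n + 1) ω| * ‖R (n + 1) ω (X (n + 1) ω)‖ := by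
          rw [selfNorm_succ, ← norm_eq_abs, ← norm_smul]
          exact norm_add_le _ _
      _ ≤ selfNorm R X ε n ω + |ε (n + 1) ω| * 1 := by
          gcongr
          · exact norm_apply_succ_noiseSum_le hR n ω
          · exact norm_apply_succ_le_one hR n ω
      _ ≤ (n + 1 : ℕ) * B := by
          push_cast
          linarith

theorem integrable_cosh_mul_selfNorm [IsFiniteMeasure μ]
    (hε : IsBoundedNoise ε ℱ μ B σ) (hR : ∀ t ω, IsInvSqrt (regGram V₀ X t ω) (R t ω))
    (hX : ∀ n, StronglyMeasurable[ℱ n] (X (n + 1))) (c : ℝ) (n : ℕ) :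
    Integrable (fun ω ↦ cosh (c * selfNorm R X ε n ω)) μ := by
  have hmeas := (hε.stronglyMeasurable_selfNorm hR hX n).mono (ℱ.le n)
  refine .of_bound
    (continuous_cosh.comp_stronglyMeasurable (hmeas.const_mul c)).aestronglyMeasurable
    (cosh (c * (n * B))) ?_
  filter_upwards [hε.selfNorm_le hR n] with ω hω
  rw [norm_of_nonneg (cosh_pos _).le, cosh_le_cosh, abs_mul, abs_mul]
  gcongr
  exact norm_nonneg _

theorem condExp_cosh_mul_selfNorm_succ_le [IsFiniteMeasure μ] {c : ℝ}
    (hε : IsBoundedNoise ε ℱ μ B σ) (hR : ∀ t ω, IsInvSqrt (regGram V₀ X t ω) (R t ω))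
    (hX : ∀ n, StronglyMeasurable[ℱ n] (X (n + 1))) (hB : 0 < B) (hc : 0 < c) (n : ℕ) :
    μ[fun ω ↦ cosh (c * selfNorm R X ε (n + 1) ω) | ℱ n] ≤ᵐ[μ] fun ω ↦
      cosh (c * ‖R (n + 1) ω (noiseSum X ε n ω)‖) *
        (1 + σ ^ 2 * (c * ‖R (n + 1) ω (X (n + 1) ω)‖) ^ 2 *
          (bennettFun (B * c) / (B * c) ^ 2)) := by
  have hnorm_smul (x : H) : ‖c • x‖ = c * ‖x‖ := by rw [norm_smul, norm_of_nonneg hc.le]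
  have hX' : ∀ i ∈ Finset.Icc 1 (n + 1), StronglyMeasurable[ℱ n] (X i) := fun _ ↦
    stronglyMeasurable_of_mem_Icc_succ hX
  have hM := hε.stronglyMeasurable_noiseSum hX n
  have hy := (stronglyMeasurable_norm_apply hR hX' hM).const_mul c
  have hz := (stronglyMeasurable_norm_apply hR hX' (hX n)).const_mul c
  have hyz : StronglyMeasurable[ℱ n] fun ω ↦
      ⟪c • R (n + 1) ω (noiseSum X ε n ω), c • R (n + 1) ω (X (n + 1) ω)⟫ := by
    simp only [real_inner_smul_left, real_inner_smul_right]
    exact ((stronglyMeasurable_inner_apply hR hX' hM (hX n)).const_mul c).const_mul c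
  have hy_le : ∀ᵐ ω ∂μ, c * ‖R (n + 1) ω (noiseSum X ε n ω)‖ ≤ c * (n * B) := by
    filter_upwards [hε.selfNorm_le hR n] with ω hω
    gcongr
    exact (norm_apply_succ_noiseSum_le hR n ω).trans hω
  have hz_le ω : c * ‖R (n + 1) ω (X (n + 1) ω)‖ ≤ c :=
    mul_le_of_le_one_right hc.le (norm_apply_succ_le_one hR n ω)
  have hint := hε.integrable_cosh_mul_selfNorm hR hX c (n + 1)
  have hmeas := ((hε.stronglyMeasurable n).mono (ℱ.le _)).aestronglyMeasurable (μ := μ)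
  simp only [← hnorm_smul, selfNorm_succ, smul_add, smul_comm c (ε _ _)]
    at hy hz hy_le hz_le hint ⊢
  exact condExp_cosh_norm_add_smul_le (ℱ.le n) hy hz hyz hint hmeas hB hc hy_le hz_le
    (hε.abs_le n) (hε.condExp_eq_zero n) (hε.condExp_sq_le n)

theorem condExp_cosh_mul_selfNorm_succ_le_mul_exp [IsFiniteMeasure μ]
    (hε : IsBoundedNoise ε ℱ μ B σ) (hR : ∀ t ω, IsInvSqrt (regGram V₀ X t ω) (R t ω))
    (hX : ∀ n, StronglyMeasurable[ℱ n] (X (n + 1))) (hB : 0 < B) (hl : 0 < l) (n : ℕ) :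
    μ[fun ω ↦ cosh (l / B * selfNorm R X ε (n + 1) ω) | ℱ n] ≤ᵐ[μ] fun ω ↦
      cosh (l / B * selfNorm R X ε n ω) *
        exp (σ ^ 2 * ‖R (n + 1) ω (X (n + 1) ω)‖ ^ 2 / B ^ 2 * bennettFun l) := by
  filter_upwards [hε.condExp_cosh_mul_selfNorm_succ_le hR hX hB (div_pos hl hB) n] with ω hω
  refine hω.trans (mul_le_mul ?_ ?_ ?_ (cosh_pos _).le)
  · rw [cosh_le_cosh, abs_mul, abs_mul]
    gcongr
    exact norm_apply_succ_noiseSum_le hR n ω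
  · rw [mul_div_cancel₀ _ hB.ne', add_comm]
    refine (add_one_le_exp _).trans_eq (congrArg exp ?_)
    field_simp
  · have := bennettFun_nonneg (B * (l / B))
    positivity

theorem supermartingale_coshWeight [IsFiniteMeasure μ]
    (hε : IsBoundedNoise ε ℱ μ B σ) (hR : ∀ t ω, IsInvSqrt (regGram V₀ X t ω) (R t ω))
    (hX : ∀ n, StronglyMeasurable[ℱ n] (X (n + 1))) (hB : 0 < B) (hl : 0 < l) :
    Supermartingale (fun n ω ↦ coshWeight B l (selfNorm R X ε n ω) (σ ^ 2 * cumEnergy R X n ω))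
      ℱ μ := by
  let D n ω := exp (-(σ ^ 2 * cumEnergy R X n ω / B ^ 2 * bennettFun l))
  have hD_meas {n k} (hX' : ∀ i ∈ Finset.Icc 1 n, StronglyMeasurable[ℱ k] (X i)) :
      StronglyMeasurable[ℱ k] (D n) :=
    (by fun_prop : Continuous fun x ↦ exp (-(σ ^ 2 * x / B ^ 2 * bennettFun l)))
      |>.comp_stronglyMeasurable (stronglyMeasurable_cumEnergy hR hX')
  have hD_succ n ω : exp (σ ^ 2 * ‖R (n + 1) ω (X (n + 1) ω)‖ ^ 2 / B ^ 2 * bennettFun l) *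
      D (n + 1) ω = D n ω := by
    simp only [D]
    rw [← exp_add, cumEnergy_succ]
    ring_nf
  have hD_le n ω : ‖D n ω‖ ≤ 1 := by
    rw [norm_of_nonneg (exp_pos _).le, exp_le_one_iff, neg_nonpos]
    have := bennettFun_nonneg l
    have := cumEnergy_nonneg (R := R) (X := X) n ω
    positivity
  have hD_meas_self n : StronglyMeasurable[ℱ n] (D n) :=
    hD_meas fun _ ↦ stronglyMeasurable_of_mem_Icc hX
  have hint n : Integrable (fun ω ↦ cosh (l / B * selfNorm R X ε n ω) * D n ω) μ :=
    (hε.integrable_cosh_mul_selfNorm hR hX _ n).mul_bdd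
      ((hD_meas_self n).mono (ℱ.le n)).aestronglyMeasurable (ae_of_all _ (hD_le n))
  refine supermartingale_nat (fun n ↦ .mul ?_ (hD_meas_self n)) hint fun n ↦ ?_
  · exact continuous_cosh.comp_stronglyMeasurable
      ((hε.stronglyMeasurable_selfNorm hR hX n).const_mul _)
  have hpull := condExp_mul_of_stronglyMeasurable_right
    (hD_meas fun _ ↦ stronglyMeasurable_of_mem_Icc_succ hX) (hint (n + 1))
    (hε.integrable_cosh_mul_selfNorm hR hX _ (n + 1))
  filter_upwards [hpull, hε.condExp_cosh_mul_selfNorm_succ_le_mul_exp hR hX hB hl n]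
    with ω hpull hstep
  refine hpull.trans_le ((mul_le_mul_of_nonneg_right hstep (exp_pos _).le).trans_eq ?_)
  rw [mul_assoc]
  exact congrArg _ (hD_succ n ω)

theorem isLSupermartingale_coshMixture [IsFiniteMeasure μ]
    (hε : IsBoundedNoise ε ℱ μ B σ) (hR : ∀ t ω, IsInvSqrt (regGram V₀ X t ω) (R t ω))
    (hX : ∀ n, StronglyMeasurable[ℱ n] (X (n + 1))) (hB : 0 < B) (θ : ℝ) :
    IsLSupermartingale
      (fun n ω ↦ coshMixture B θ (selfNorm R X ε n ω) (σ ^ 2 * cumEnergy R X n ω)) ℱ μ := by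
  refine .lintegral (fun n ↦ ?_) ((ae_pos_logGammaTail _).mono fun l hl ↦
    isLSupermartingale_ofReal (hε.supermartingale_coshWeight hR hX hB hl)
      fun n ω ↦ coshWeight_nonneg _ _ _ _)
  have hs := (hε.stronglyMeasurable_selfNorm hR hX n).measurable
  have hν : Measurable[ℱ n] fun ω ↦ σ ^ 2 * cumEnergy R X n ω :=
    (stronglyMeasurable_cumEnergy hR fun _ ↦
      stronglyMeasurable_of_mem_Icc hX).measurable.const_mul _
  exact ((continuous_coshWeight B).measurable.comp
    (((hs.prodMk hν).comp measurable_fst).prodMk measurable_snd)).ennreal_ofReal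

theorem measure_exists_inv_le_coshMixture [IsProbabilityMeasure μ]
    (hε : IsBoundedNoise ε ℱ μ B σ) (hR : ∀ t ω, IsInvSqrt (regGram V₀ X t ω) (R t ω))
    (hX : ∀ n, StronglyMeasurable[ℱ n] (X (n + 1))) (hB : 0 < B) (θ : ℝ) (δ : ℝ≥0∞) :
    μ {ω | ∃ n, δ⁻¹ ≤ coshMixture B θ (selfNorm R X ε n ω) (σ ^ 2 * cumEnergy R X n ω)} ≤ δ := by
  refine (hε.isLSupermartingale_coshMixture hR hX hB θ).measure_exists_inv_le ?_ δ
  simpa [selfNorm, noiseSum, cumEnergy] using coshMixture_zero_zero_le_one B θ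

end IsBoundedNoise

end SelfNormalized

theorem ofReal_one_sub_add_le_measure {Ω : Type*} {m0 : MeasurableSpace Ω} {μ : Measure Ω}
    [IsProbabilityMeasure μ] {T E₁ E₂ : Set Ω} {δ₁ δ₂ : ℝ} (hT : Tᶜ ⊆ E₁ ∪ E₂) (hδ₁ : 0 ≤ δ₁)
    (hδ₂ : 0 ≤ δ₂) (hE₁ : μ E₁ ≤ ENNReal.ofReal δ₁) (hE₂ : μ E₂ ≤ ENNReal.ofReal δ₂) :
    ENNReal.ofReal (1 - (δ₁ + δ₂)) ≤ μ T := by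
  rw [ENNReal.ofReal_sub _ (by positivity), ENNReal.ofReal_one, tsub_le_iff_right,
    ENNReal.ofReal_add hδ₁ hδ₂]
  calc 1 = μ (T ∪ Tᶜ) := by rw [Set.union_compl_self, measure_univ]
    _ ≤ μ T + μ Tᶜ := measure_union_le _ _
    _ ≤ μ T + (μ E₁ + μ E₂) := by
      gcongr
      exact (measure_mono hT).trans (measure_union_le _ _)
    _ ≤ μ T + (ENNReal.ofReal δ₁ + ENNReal.ofReal δ₂) := by gcongr

theorem stmt_8_general {H : Type*} [NormedAddCommGroup H] [InnerProductSpace ℝ H]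
    {Ω : Type*} {m0 : MeasurableSpace Ω} {μ : Measure Ω} [IsProbabilityMeasure μ]
    (ℱ : Filtration ℕ m0) (X : ℕ → Ω → H) (ε : ℕ → Ω → ℝ)
    (hX : ∀ t, 1 ≤ t → StronglyMeasurable[ℱ (t - 1)] (X t))
    (hεmeas : ∀ t, 1 ≤ t → StronglyMeasurable[ℱ t] (ε t))
    (hε0 : ∀ t, 1 ≤ t → μ[ε t | ℱ (t - 1)] =ᵐ[μ] 0)
    (V₀ : H →L[ℝ] H) (R : ℕ → Ω → H →L[ℝ] H)
    (hR : ∀ t ω, IsInvSqrt (regGram V₀ X t ω) (R t ω))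
    (B : ℝ) (hB : 0 < B) (σ : ℝ) (hbdd : ∀ t, 1 ≤ t → ∀ᵐ ω ∂μ, |ε t ω| ≤ B)
    (hvar : ∀ t, 1 ≤ t → Var[ε t; μ | ℱ (t - 1)] ≤ᵐ[μ] fun _ ↦ σ ^ 2)
    (σhat : ℕ → Ω → ℝ) (δ₁ δ₂ : ℝ) (hδ₁ : 0 ≤ δ₁) (hδ₂ : 0 < δ₂)
    (hσhat : μ {ω | ∃ t, 1 ≤ t ∧ σhat t ω ^ 2 < σ ^ 2} ≤ ENNReal.ofReal δ₁)
    (θ : ℝ) (hθ : 0 < θ) :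
    ENNReal.ofReal (1 - (δ₁ + δ₂)) ≤
      μ {ω | ∀ t, 1 ≤ t → mixedBennettExpr B θ (σhat t ω ^ 2 * cumEnergy R X t ω)
        (selfNorm R X ε t ω) < 2 / δ₂} := by
  have hε : IsBoundedNoise ε ℱ μ B σ := .of_condVar_le hεmeas hbdd hε0 hvar
  refine ofReal_one_sub_add_le_measure (fun ω hω ↦ ?_) hδ₁ hδ₂.le hσhat
    (hε.measure_exists_inv_le_coshMixture hR (fun n ↦ hX (n + 1) n.succ_pos) hB θ _)
  contrapose! hω
  obtain ⟨hσ_le, hmix_lt⟩ : (∀ t, 1 ≤ t → σ ^ 2 ≤ σhat t ω ^ 2) ∧ _ := by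
    simpa only [Set.mem_union, Set.mem_ofPred_eq, not_or, not_exists, not_and, not_lt, not_le]
      using hω
  rw [Set.notMem_compl_iff]
  exact fun t ht ↦ mixedBennettExpr_lt_of_coshMixture_lt hB hθ hδ₂ (norm_nonneg _)
    (mul_nonneg (sq_nonneg _) (cumEnergy_nonneg t ω))
    (mul_le_mul_of_nonneg_right (hσ_le t ht) (cumEnergy_nonneg t ω)) (hmix_lt t)

theorem stmt_8
    {H : Type*} [NormedAddCommGroup H] [InnerProductSpace ℝ H] [CompleteSpace H]
    [SecondCountableTopology H]
    {Ω : Type*} {m0 : MeasurableSpace Ω} {μ : Measure Ω} [IsProbabilityMeasure μ]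
    (ℱ : Filtration ℕ m0)
    (X : ℕ → Ω → H) (ε : ℕ → Ω → ℝ)
    (hX : ∀ t, 1 ≤ t → StronglyMeasurable[ℱ (t - 1)] (X t))
    (hεmeas : ∀ t, 1 ≤ t → StronglyMeasurable[ℱ t] (ε t))
    (hεint : ∀ t, 1 ≤ t → Integrable (ε t) μ)
    (hε0 : ∀ t, 1 ≤ t → μ[ε t | ℱ (t - 1)] =ᵐ[μ] 0)
    (ρ : ℝ) (hρ : 0 < ρ)
    (Q Qinv : ℕ → Ω → H →L[ℝ] H)
    (hQpos : ∀ t ω, (Q t ω).IsPositive)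
    (hQsq : ∀ t ω, Q t ω ∘L Q t ω =
      ρ • (1 : H →L[ℝ] H) + ∑ i ∈ Finset.Icc 1 t, outerProd (X i ω))
    (hQinv : ∀ t ω, Qinv t ω ∘L Q t ω = 1 ∧ Q t ω ∘L Qinv t ω = 1)
    (B : ℝ) (hB : 0 < B) (σ : ℝ)
    (hbdd : ∀ t, 1 ≤ t → ∀ᵐ ω ∂μ, |ε t ω| ≤ B)
    (hvar : ∀ t, 1 ≤ t →
      μ[fun ω => (ε t ω - (μ[ε t | ℱ (t - 1)]) ω) ^ 2 | ℱ (t - 1)] =ᵐ[μ]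
        fun _ => σ ^ 2)
    (σhat : ℕ → Ω → ℝ)
    (hσhatmeas : ∀ t, 1 ≤ t → StronglyMeasurable[ℱ t] (σhat t))
    (δ₁ δ₂ : ℝ) (hδ₁ : δ₁ ∈ Set.Ioo (0 : ℝ) 1) (hδ₂ : δ₂ ∈ Set.Ioo (0 : ℝ) 1)
    (hσhat : μ {ω | ∃ t, 1 ≤ t ∧ σhat t ω ^ 2 < σ ^ 2} ≤ ENNReal.ofReal δ₁)
    (θ : ℝ) (hθ : 0 < θ) :
    ENNReal.ofReal (1 - (δ₁ + δ₂)) ≤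
      μ {ω | ∀ t, 1 ≤ t →
        mixedBennettExpr B θ
          (σhat t ω ^ 2 * ∑ i ∈ Finset.Icc 1 t, ‖Qinv i ω (X i ω)‖ ^ 2)
          ‖Qinv t ω (∑ i ∈ Finset.Icc 1 t, ε i ω • X i ω)‖ < 2 / δ₂} := by
  exact stmt_8_general ℱ X ε hX hεmeas hε0 (ρ • 1) Qinv
    (fun t ω ↦ .of_comp_self (hQpos t ω).isSymmetric (hQsq t ω) (hQinv t ω).1 (hQinv t ω).2)
    B hB σ hbdd (fun t ht ↦ (hvar t ht).le) σhat δ₁ δ₂ hδ₁.1.le hδ₂.1 hσhat θ hθ
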